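/- Let σ_0,…,σ_m generate a Nikishin system N(σ_0,…,σ_m) on intervals Δ_0,…,Δ_m. For all 0 ≤ i < j ≤ m and all z ∈ ℂ∖(Δ_i ∪ Δ_j), the Cauchy transforms satisfy: ⟨σ_j,σ_{j−1},…,σ_i⟩^(z) = Σ_{k=i}^{j−1} (−1)^{k−i} ⟨σ_i,…,σ_k⟩^(z) · ⟨σ_j,σ_{j−1},…,σ_{k+1}⟩^(z) + (−1)^{j−i} ⟨σ_i,…,σ_j⟩^(z), where μ̂(z) = ∫ dμ(t)/(z−t) denotes the Cauchy transform of the measure μ. -/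

import Mathlib

/-!
Write `σ_p f = ∫ f dσ_p`, let `C_p f` be the Cauchy transform of `f dσ_p`, and let
`v(t) = 1 / (z - t)`. Two identities for measures with separated supports carry the proof. Fubini
gives `σ_p(f · C_q g) = -σ_q(C_p f · g)`; iterated along a chain `p_0, …, p_n` it moves all the
transforms to the other side, so that the reversed chain has Cauchy transform
`(-1)^n σ_{p_0}(C_{p_1} ⋯ C_{p_n} v)` at `z`. Integrating `1 = ((z - y) - (z - x)) / (x - y)` gives
`σ_p f · σ_q g = -σ_q((z - y) C_p f · g) - σ_p((z - x) f · C_q g)`. Starting from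
`(-1)^n σ_{p_0}((z - x) f · C_{p_1} ⋯ C_{p_n} v)`, the second identity with `p = p_0`, `q = p_1`
splits off a product of a chain and a reversed chain and leaves the same expression for
`p_1, …, p_n` with `C_{p_0} f` in place of `f`. After `n` such steps only products remain, and
`f = v`, for which `(z - x) f = 1`, is the formula.
-/

open MeasureTheory Polynomial Set Filter

noncomputable section

/-- The support of a Borel measure on `ℝ`: points all of whose open neighborhoods
have positive measure. -/
def msupport (μ : Measure ℝ) : Set ℝ :=
  {x : ℝ | ∀ U : Set ℝ, IsOpen U → x ∈ U → μ U ≠ 0}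

/-- The copy of a real set inside `ℂ`. -/
def cpx (s : Set ℝ) : Set ℂ := (fun x : ℝ => (x : ℂ)) '' s

/-- `nikhat μ e j g` is the Cauchy transform of the measure `⟨σ_j, …, σ_{j+g}⟩`,
where `σ_i = (e i) • (μ i)` is a measure of constant sign. -/
def nikhat (μ : ℕ → Measure ℝ) (e : ℕ → ℝ) : ℕ → ℕ → ℂ → ℂ
  | j, 0, z => (e j : ℂ) * ∫ t, 1 / (z - (t : ℂ)) ∂(μ j)
  | j, g + 1, z => (e j : ℂ) * ∫ t, nikhat μ e (j + 1) g (t : ℂ) / (z - (t : ℂ)) ∂(μ j)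

/-- The Cauchy transform `ŝ_{j+1,k}` of `s_{j+1,k} = ⟨σ_{j+1},…,σ_k⟩`, with the
convention that it is `≡ 1` when `k ≤ j`. -/
def wt (μ : ℕ → Measure ℝ) (e : ℕ → ℝ) (j k : ℕ) (z : ℂ) : ℂ :=
  if j < k then nikhat μ e (j + 1) (k - (j + 1)) z else 1

/-- Integral of `f` against the measure `s_{j,k} = ⟨σ_j, …, σ_k⟩`
(whose density with respect to `σ_j` is `ŝ_{j+1,k}`). -/
def sInt (μ : ℕ → Measure ℝ) (e : ℕ → ℝ) (j k : ℕ) (f : ℝ → ℂ) : ℂ :=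
  (e j : ℂ) * ∫ x, f x * wt μ e j k (x : ℂ) ∂(μ j)

/-- The linear form `𝒜_{n,j}(z) = ∑_{k=j}^{m₁} a_k(z) ŝ¹_{j+1,k}(z)`. -/
def linForm (μ : ℕ → Measure ℝ) (e : ℕ → ℝ) (m₁ j : ℕ) (A : ℕ → Polynomial ℝ)
    (z : ℂ) : ℂ :=
  ∑ k ∈ Finset.Icc j m₁, Polynomial.aeval z (A k) * wt μ e j k z

/-- The linear forms with negative index:
`𝒜_{n,-j-1}(z) = ∫ 𝒜_{n,-j}(x) dσ²_j(x) / (z - x)`. -/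
def linFormNeg (μ : ℕ → Measure ℝ) (e : ℕ → ℝ) (F : ℂ → ℂ) : ℕ → ℂ → ℂ
  | 0 => F
  | j + 1 => fun z => (e j : ℂ) * ∫ x, linFormNeg μ e F j (x : ℂ) / (z - (x : ℂ)) ∂(μ j)

/-- A Nikishin system `N(σ_0,…,σ_m)` of measures of constant sign `σ_j = (e j) • (μ j)`,
with `Co(supp σ_j) = Δ_j = [a j, b j]` and `Δ_j ∩ Δ_{j+1} = ∅`. -/
structure NikSys (m : ℕ) where
  μ : ℕ → Measure ℝ
  e : ℕ → ℝ
  a : ℕ → ℝ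
  b : ℕ → ℝ
  fin : ∀ j, IsFiniteMeasure (μ j)
  sgn : ∀ j, e j = 1 ∨ e j = -1
  hull : ∀ j ≤ m, convexHull ℝ (msupport (μ j)) = Set.Icc (a j) (b j)
  inf : ∀ j ≤ m, (msupport (μ j)).Infinite
  disj : ∀ j < m, Set.Icc (a j) (b j) ∩ Set.Icc (a (j + 1)) (b (j + 1)) = ∅

/-- Decreasing multi-index (the class `ℤ₊^{m+1}(•)`). -/
def Decr (m : ℕ) (n : ℕ → ℕ) : Prop := ∀ j < m, n (j + 1) ≤ n j

/-- `|n| = n_0 + ⋯ + n_m`. -/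
def msum (m : ℕ) (n : ℕ → ℕ) : ℕ := ∑ j ∈ Finset.range (m + 1), n j

/-- `N_{1,j} = n_j + ⋯ + n_m` (partial tail sums). -/
def tailSum (m : ℕ) (n : ℕ → ℕ) (j : ℕ) : ℕ := ∑ k ∈ Finset.Icc j m, n k

/-- Mixed type multiple orthogonal polynomials relative to `(n1;n2)` and `(S1,S2)`. -/
def IsMOP (m₁ m₂ : ℕ) (S1 : NikSys m₁) (S2 : NikSys m₂)
    (n1 n2 : ℕ → ℕ) (A : ℕ → Polynomial ℝ) : Prop :=
  (∀ j ≤ m₁, (A j).degree < (n1 j : WithBot ℕ)) ∧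
  (∃ j ≤ m₁, A j ≠ 0) ∧
  ∀ k ≤ m₂, ∀ ν < n2 k,
    sInt S2.μ S2.e 0 k (fun x => (x : ℂ) ^ ν * linForm S1.μ S1.e m₁ 0 A (x : ℂ)) = 0

/-- The "monic" normalization: the last entry different from zero has leading
coefficient `1`. -/
def MonicLast (m₁ : ℕ) (A : ℕ → Polynomial ℝ) : Prop :=
  ∃ j ≤ m₁, (A j).Monic ∧ ∀ k, j < k → k ≤ m₁ → A k = 0

/-- `n^l`: increase the `l`-th component by one. -/
def bump (l : ℕ) (n : ℕ → ℕ) : ℕ → ℕ := fun j => if j = l then n j + 1 else n j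


/-- Cauchy transform of the measure `⟨σ_{i_1}, …, σ_{i_r}⟩` given by the list of
(positive part, sign) pairs; the empty list gives the constant `1` (the density of
the innermost measure). -/
def listHat : List (Measure ℝ × ℝ) → ℂ → ℂ
  | [], _ => 1
  | (p :: rest), z => (p.2 : ℂ) * ∫ t, listHat rest (t : ℂ) / (z - (t : ℂ)) ∂p.1

/-- The chain `σ_i, σ_{i+1}, …, σ_k` (increasing indices). -/
def chain (μ : ℕ → Measure ℝ) (e : ℕ → ℝ) (i k : ℕ) : List (Measure ℝ × ℝ) :=
  (List.range' i (k + 1 - i)).map fun t => (μ t, e t)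

/-- The chain `σ_k, σ_{k-1}, …, σ_i` (decreasing indices). -/
def rchain (μ : ℕ → Measure ℝ) (e : ℕ → ℝ) (i k : ℕ) : List (Measure ℝ × ℝ) :=
  (chain μ e i k).reverse

/-- The integral `∫ f dσ` against the measure of constant sign `σ = p.2 • p.1`, encoded as in
`listHat`; only the restriction of `f` to `ℝ` matters. -/
def signedIntegral (p : Measure ℝ × ℝ) (f : ℂ → ℂ) : ℂ :=
  (p.2 : ℂ) * ∫ t : ℝ, f t ∂p.1

/-- The Cauchy transform `z ↦ ∫ f(t) dσ(t) / (z - t)` of `f dσ`, where `σ = p.2 • p.1`. -/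
def cauchyTransform (p : Measure ℝ × ℝ) (f : ℂ → ℂ) (z : ℂ) : ℂ :=
  signedIntegral p fun t => f t / (z - t)

/-- The Cauchy kernel `t ↦ 1 / (z - t)` with pole at `z`. -/
def cauchyKernel (z t : ℂ) : ℂ :=
  1 / (z - t)

/-- The supports of two measures of constant sign are at positive distance. For the compact
supports of a Nikishin system this is disjointness; for unbounded ones it keeps `1 / (x - y)`
bounded on the product of the supports. -/
def SupportsSeparated (p q : Measure ℝ × ℝ) : Prop :=
  Metric.AreSeparated p.1.support q.1.support

theorem SupportsSeparated.symm {p q : Measure ℝ × ℝ} (h : SupportsSeparated p q) :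
    SupportsSeparated q p :=
  Metric.AreSeparated.symm h

theorem SupportsSeparated.notMem_cpx {p q : Measure ℝ × ℝ} (h : SupportsSeparated p q) {x : ℝ}
    (hx : x ∈ p.1.support) : (x : ℂ) ∉ cpx q.1.support := by
  rintro ⟨y, hy, hyx⟩
  obtain rfl : y = x := Complex.ofReal_injective hyx
  exact Metric.AreSeparated.disjoint h |>.notMem_of_mem_left hx hy

theorem sub_ofReal_ne_zero_of_notMem_cpx {s : Set ℝ} {z : ℂ} (hz : z ∉ cpx s) {t : ℝ}
    (ht : t ∈ s) : z - t ≠ 0 :=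
  fun h => hz ⟨t, ht, (sub_eq_zero.1 h).symm⟩

theorem exists_norm_inv_sub_le_of_areSeparated {𝕜 : Type*} [NormedDivisionRing 𝕜] {s t : Set 𝕜}
    (h : Metric.AreSeparated s t) : ∃ C, ∀ x ∈ s, ∀ y ∈ t, ‖(x - y)⁻¹‖ ≤ C := by
  obtain ⟨r, hr, hst⟩ := h
  refine ⟨r⁻¹.toReal, fun x hx y hy => ?_⟩
  have hxy : r ≤ ENNReal.ofReal ‖x - y‖ := by
    simpa only [edist_dist, dist_eq_norm] using hst x hx y hy
  have hr_top : r ≠ ⊤ := ne_top_of_le_ne_top ENNReal.ofReal_ne_top hxy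
  rw [norm_inv, ENNReal.toReal_inv]
  exact inv_anti₀ (ENNReal.toReal_pos hr hr_top)
    (ENNReal.toReal_le_of_le_ofReal (norm_nonneg _) hxy)

theorem exists_norm_inv_sub_ofReal_le {s : Set ℝ} (hs : IsClosed s) {z : ℂ} (hz : z ∉ cpx s) :
    ∃ C, ∀ t ∈ s, ‖(z - (t : ℂ))⁻¹‖ ≤ C := by
  have hcl : IsClosed (cpx s) := Complex.isometry_ofReal.isClosedEmbedding.isClosedMap s hs
  obtain ⟨r, hr, hzr⟩ := Metric.exists_pos_forall_lt_edist isCompact_singleton hcl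
    (disjoint_singleton_left.2 hz)
  obtain ⟨C, hC⟩ := exists_norm_inv_sub_le_of_areSeparated (s := {z}) (t := cpx s)
    ⟨r, by exact_mod_cast hr.ne', fun x hx y hy => (hzr x hx y hy).le⟩
  exact ⟨C, fun t ht => hC z rfl t ⟨t, ht, rfl⟩⟩

theorem integrable_div_sub {μ : Measure ℝ} {z : ℂ} (hz : z ∉ cpx μ.support) {f : ℝ → ℂ}
    (hf : Integrable f μ) : Integrable (fun t : ℝ => f t / (z - t)) μ := by
  obtain ⟨C, hC⟩ := exists_norm_inv_sub_ofReal_le Measure.isClosed_support hz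
  simp only [div_eq_inv_mul]
  refine hf.bdd_mul (c := C) (by fun_prop) ?_
  filter_upwards [Measure.support_mem_ae (μ := μ)] with t ht using hC t ht

theorem integrable_prod_mul_div_sub {μ ν : Measure ℝ} [SFinite ν]
    (h : Metric.AreSeparated μ.support ν.support) {f g : ℝ → ℂ} (hf : Integrable f μ)
    (hg : Integrable g ν) :
    Integrable (fun x : ℝ × ℝ => f x.1 * g x.2 / ((x.1 : ℂ) - x.2)) (μ.prod ν) := by
  obtain ⟨C, hC⟩ := exists_norm_inv_sub_le_of_areSeparated h
  simp only [div_eq_inv_mul]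
  refine (hf.mul_prod hg).bdd_mul (c := C) (by fun_prop) ?_
  filter_upwards [Measure.quasiMeasurePreserving_fst.ae (Measure.support_mem_ae (μ := μ)),
    Measure.quasiMeasurePreserving_snd.ae (Measure.support_mem_ae (μ := ν))] with x hμ hν
  have := hC x.1 hμ x.2 hν
  rwa [← Complex.norm_real, Complex.ofReal_inv, Complex.ofReal_sub] at this

theorem signedIntegral_congr {p : Measure ℝ × ℝ} {f g : ℂ → ℂ}
    (h : ∀ t ∈ p.1.support, f (t : ℂ) = g t) : signedIntegral p f = signedIntegral p g := by
  unfold signedIntegral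
  congr 1
  refine integral_congr_ae ?_
  filter_upwards [Measure.support_mem_ae (μ := p.1)] with t ht using h t ht

theorem signedIntegral_sub {p : Measure ℝ × ℝ} {f g : ℂ → ℂ}
    (hf : Integrable (fun t : ℝ => f t) p.1) (hg : Integrable (fun t : ℝ => g t) p.1) :
    signedIntegral p (fun t => f t - g t) = signedIntegral p f - signedIntegral p g := by
  simp only [signedIntegral, integral_sub hf hg, mul_sub]

theorem signedIntegral_add {p : Measure ℝ × ℝ} {f g : ℂ → ℂ}
    (hf : Integrable (fun t : ℝ => f t) p.1) (hg : Integrable (fun t : ℝ => g t) p.1) :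
    signedIntegral p (fun t => f t + g t) = signedIntegral p f + signedIntegral p g := by
  simp only [signedIntegral, integral_add hf hg, mul_add]

theorem signedIntegral_mul_const (p : Measure ℝ × ℝ) (f : ℂ → ℂ) (c : ℂ) :
    signedIntegral p (fun t => f t * c) = signedIntegral p f * c := by
  simp only [signedIntegral, integral_mul_const, mul_assoc]

section Pair

variable {p q : Measure ℝ × ℝ} {f g : ℂ → ℂ}

theorem integrable_mul_cauchyTransform [SFinite p.1] [SFinite q.1] (h : SupportsSeparated p q)
    (hf : Integrable (fun t : ℝ => f t) p.1) (hg : Integrable (fun t : ℝ => g t) q.1) :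
    Integrable (fun t : ℝ => f t * cauchyTransform q g t) p.1 := by
  have hprod := (integrable_prod_mul_div_sub h hf hg).integral_prod_left
  refine (hprod.const_mul (q.2 : ℂ)).congr (.of_forall fun x => ?_)
  simp only [cauchyTransform, signedIntegral, mul_div_assoc, integral_const_mul]
  ring

theorem integrable_cauchyTransform [IsFiniteMeasure p.1] [SFinite q.1]
    (h : SupportsSeparated p q) (hg : Integrable (fun t : ℝ => g t) q.1) :
    Integrable (fun t : ℝ => cauchyTransform q g t) p.1 := by
  simpa only [one_mul] using
    integrable_mul_cauchyTransform h (f := fun _ => 1) (integrable_const 1) hg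

theorem signedIntegral_mul_cauchyTransform [SFinite p.1] [SFinite q.1]
    (h : SupportsSeparated p q) (hf : Integrable (fun t : ℝ => f t) p.1)
    (hg : Integrable (fun t : ℝ => g t) q.1) :
    signedIntegral p (fun x => f x * cauchyTransform q g x) =
      -signedIntegral q (fun y => cauchyTransform p f y * g y) := by
  have hinner (x : ℝ) : f x * cauchyTransform q g x =
      q.2 * ∫ y : ℝ, f x * g y / ((x : ℂ) - y) ∂q.1 := by
    simp only [cauchyTransform, signedIntegral, mul_div_assoc, integral_const_mul]
    ring
  have houter (y : ℝ) : cauchyTransform p f y * g y =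
      -(p.2 * ∫ x : ℝ, f x * g y / ((x : ℂ) - y) ∂p.1) := by
    have hkernel (x : ℝ) : f x * g y / ((x : ℂ) - y) = -(f x / ((y : ℂ) - x) * g y) := by
      rw [← neg_sub (y : ℂ) x, div_neg]
      ring
    simp only [cauchyTransform, signedIntegral, hkernel, integral_neg, integral_mul_const]
    ring
  simp only [signedIntegral, hinner, houter, integral_neg, integral_const_mul]
  rw [integral_integral_swap (integrable_prod_mul_div_sub h hf hg)]
  ring

theorem cauchyTransform_sub_mul {w : ℂ} (hw : w ∉ cpx q.1.support) (z : ℂ)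
    (hg : Integrable (fun t : ℝ => g t) q.1) :
    cauchyTransform q (fun t => (z - t) * g t) w =
      (z - w) * cauchyTransform q g w + signedIntegral q g := by
  have hsplit : ∀ t ∈ q.1.support,
      (z - (t : ℂ)) * g t / (w - t) = g t / (w - t) * (z - w) + g t := by
    intro t ht
    have := sub_ofReal_ne_zero_of_notMem_cpx hw ht
    field_simp
    ring
  unfold cauchyTransform
  rw [signedIntegral_congr (g := fun t => g t / (w - t) * (z - w) + g t) hsplit,
    signedIntegral_add ((integrable_div_sub hw hg).mul_const _) hg, signedIntegral_mul_const,
    mul_comm]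

theorem sub_mul_cauchyTransform (h : SupportsSeparated p q) (z : ℂ)
    (hg : Integrable (fun t : ℝ => g t) q.1) {x : ℝ} (hx : x ∈ p.1.support) :
    (z - x) * cauchyTransform q g x =
      cauchyTransform q (fun t => (z - t) * g t) x - signedIntegral q g := by
  rw [cauchyTransform_sub_mul (h.notMem_cpx hx) z hg, add_sub_cancel_right]

theorem integrable_sub_mul_cauchyTransform [IsFiniteMeasure p.1] [SFinite q.1]
    (h : SupportsSeparated p q) {z : ℂ} (hg : Integrable (fun t : ℝ => g t) q.1)
    (hzg : Integrable (fun t : ℝ => (z - t) * g t) q.1) :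
    Integrable (fun t : ℝ => (z - t) * cauchyTransform q g t) p.1 := by
  refine ((integrable_cauchyTransform h (g := fun t => (z - t) * g t) hzg).sub
    (integrable_const (signedIntegral q g))).congr ?_
  filter_upwards [Measure.support_mem_ae (μ := p.1)] with x hx
  exact (sub_mul_cauchyTransform h z hg hx).symm

/-- Integrate `1 = ((z - y) - (z - x)) / (x - y)` against `f dσ_p ⊗ g dσ_q`. -/
theorem signedIntegral_mul_signedIntegral [SFinite p.1] [SFinite q.1]
    (h : SupportsSeparated p q) {z : ℂ} (hf : Integrable (fun t : ℝ => f t) p.1)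
    (hzf : Integrable (fun t : ℝ => (z - t) * f t) p.1)
    (hg : Integrable (fun t : ℝ => g t) q.1)
    (hzg : Integrable (fun t : ℝ => (z - t) * g t) q.1) :
    signedIntegral p f * signedIntegral q g =
      -signedIntegral q (fun y => (z - y) * cauchyTransform p f y * g y) -
        signedIntegral p (fun x => (z - x) * f x * cauchyTransform q g x) := by
  have hpoint : ∀ x ∈ p.1.support, f (x : ℂ) * signedIntegral q g =
      f x * cauchyTransform q (fun y => (z - y) * g y) x -
        (z - x) * f x * cauchyTransform q g x := by
    intro x hx
    rw [cauchyTransform_sub_mul (h.notMem_cpx hx) z hg]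
    ring
  have hswap := signedIntegral_mul_cauchyTransform h (g := fun y => (z - y) * g y) hf hzg
  rw [← signedIntegral_mul_const, signedIntegral_congr (g := fun x =>
    f x * cauchyTransform q (fun y => (z - y) * g y) x - (z - x) * f x * cauchyTransform q g x)
    hpoint, signedIntegral_sub
    (integrable_mul_cauchyTransform h (g := fun y => (z - y) * g y) hf hzg)
    (integrable_mul_cauchyTransform h (f := fun x => (z - x) * f x) hzf hg), hswap]
  simp only [mul_left_comm, mul_assoc]

end Pair

theorem integrable_cauchyKernel {μ : Measure ℝ} [IsFiniteMeasure μ] {z : ℂ}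
    (hz : z ∉ cpx μ.support) : Integrable (fun t : ℝ => cauchyKernel z t) μ :=
  integrable_div_sub hz (integrable_const 1)

theorem sub_mul_cauchyKernel {s : Set ℝ} {z : ℂ} (hz : z ∉ cpx s) {t : ℝ} (ht : t ∈ s) :
    (z - t) * cauchyKernel z t = 1 :=
  mul_one_div_cancel (sub_ofReal_ne_zero_of_notMem_cpx hz ht)

theorem integrable_sub_mul_cauchyKernel {μ : Measure ℝ} [IsFiniteMeasure μ] {z : ℂ}
    (hz : z ∉ cpx μ.support) : Integrable (fun t : ℝ => (z - t) * cauchyKernel z t) μ := by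
  refine (integrable_const 1).congr ?_
  filter_upwards [Measure.support_mem_ae (μ := μ)] with t ht
  exact (sub_mul_cauchyKernel hz ht).symm

theorem cauchyTransform_eq_signedIntegral_cauchyKernel (p : Measure ℝ × ℝ) (f : ℂ → ℂ) (z : ℂ) :
    cauchyTransform p f z = signedIntegral p (fun t => f t * cauchyKernel z t) := by
  simp only [cauchyTransform, cauchyKernel, mul_one_div]

theorem listHat_eq_foldr (l : List (Measure ℝ × ℝ)) :
    listHat l = l.foldr cauchyTransform fun _ => 1 := by
  induction l with
  | nil => rfl
  | cons p l ih => rw [List.foldr_cons, ← ih]; rfl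

theorem listHat_nil (z : ℂ) : listHat [] z = 1 :=
  rfl

theorem listHat_cons (p : Measure ℝ × ℝ) (l : List (Measure ℝ × ℝ)) :
    listHat (p :: l) = cauchyTransform p (listHat l) :=
  rfl

section Chain

variable {p : Measure ℝ × ℝ} {l : List (Measure ℝ × ℝ)} {f : ℂ → ℂ} {z : ℂ}

theorem integrable_foldr_cauchyTransform (hfin : ∀ q ∈ p :: l, IsFiniteMeasure q.1)
    (hsep : (p :: l).IsChain SupportsSeparated)
    (hf : Integrable (fun t : ℝ => f t) ((p :: l).getLast (List.cons_ne_nil p l)).1) :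
    Integrable (fun t : ℝ => l.foldr cauchyTransform f t) p.1 := by
  induction l generalizing p with
  | nil => exact hf
  | cons q l ih =>
    rw [List.forall_mem_cons] at hfin
    rw [List.isChain_cons_cons] at hsep
    have := hfin.1
    have := hfin.2 q List.mem_cons_self
    exact integrable_cauchyTransform hsep.1 (ih hfin.2 hsep.2 hf)

theorem integrable_listHat (hfin : ∀ q ∈ p :: l, IsFiniteMeasure q.1)
    (hsep : (p :: l).IsChain SupportsSeparated) :
    Integrable (fun t : ℝ => listHat l t) p.1 := by
  have := hfin _ (List.getLast_mem (List.cons_ne_nil p l))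
  rw [listHat_eq_foldr]
  exact integrable_foldr_cauchyTransform hfin hsep (integrable_const 1)

theorem integrable_foldr_cauchyKernel (hfin : ∀ q ∈ p :: l, IsFiniteMeasure q.1)
    (hsep : (p :: l).IsChain SupportsSeparated)
    (hz : z ∉ cpx ((p :: l).getLast (List.cons_ne_nil p l)).1.support) :
    Integrable (fun t : ℝ => l.foldr cauchyTransform (cauchyKernel z) t) p.1 :=
  have := hfin _ (List.getLast_mem (List.cons_ne_nil p l))
  integrable_foldr_cauchyTransform hfin hsep (integrable_cauchyKernel hz)

theorem integrable_sub_mul_foldr_cauchyKernel (hfin : ∀ q ∈ p :: l, IsFiniteMeasure q.1)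
    (hsep : (p :: l).IsChain SupportsSeparated)
    (hz : z ∉ cpx ((p :: l).getLast (List.cons_ne_nil p l)).1.support) :
    Integrable (fun t : ℝ => (z - t) * l.foldr cauchyTransform (cauchyKernel z) t) p.1 := by
  induction l generalizing p with
  | nil =>
    have := hfin p List.mem_cons_self
    exact integrable_sub_mul_cauchyKernel hz
  | cons q l ih =>
    rw [List.forall_mem_cons] at hfin
    rw [List.isChain_cons_cons] at hsep
    have := hfin.1
    have := hfin.2 q List.mem_cons_self
    exact integrable_sub_mul_cauchyTransform hsep.1
      (integrable_foldr_cauchyKernel hfin.2 hsep.2 hz) (ih hfin.2 hsep.2 hz)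

theorem foldr_cauchyTransform_reverse_cons (hfin : ∀ q ∈ p :: l, IsFiniteMeasure q.1)
    (hsep : (p :: l).IsChain SupportsSeparated)
    (hz : z ∉ cpx ((p :: l).getLast (List.cons_ne_nil p l)).1.support)
    (hf : Integrable (fun t : ℝ => f t) p.1) :
    (p :: l).reverse.foldr cauchyTransform f z = (-1) ^ l.length *
      signedIntegral p (fun t => f t * l.foldr cauchyTransform (cauchyKernel z) t) := by
  induction l generalizing p f with
  | nil =>
    simpa using cauchyTransform_eq_signedIntegral_cauchyKernel p f z
  | cons q l ih =>
    rw [List.forall_mem_cons] at hfin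
    rw [List.isChain_cons_cons] at hsep
    have := hfin.1
    have := hfin.2 q List.mem_cons_self
    rw [List.reverse_cons, List.foldr_append, List.foldr_cons, List.foldr_nil,
      ih hfin.2 hsep.2 hz (integrable_cauchyTransform hsep.1.symm hf), List.foldr_cons,
      signedIntegral_mul_cauchyTransform hsep.1 hf
        (integrable_foldr_cauchyKernel hfin.2 hsep.2 hz), List.length_cons]
    ring

theorem listHat_reverse_cons (hfin : ∀ q ∈ p :: l, IsFiniteMeasure q.1)
    (hsep : (p :: l).IsChain SupportsSeparated)
    (hz : z ∉ cpx ((p :: l).getLast (List.cons_ne_nil p l)).1.support) :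
    listHat (p :: l).reverse z =
      (-1) ^ l.length * signedIntegral p (l.foldr cauchyTransform (cauchyKernel z)) := by
  have := hfin p List.mem_cons_self
  rw [listHat_eq_foldr, foldr_cauchyTransform_reverse_cons hfin hsep hz (integrable_const 1)]
  simp only [one_mul]

/-- Splitting off the first summand and moving the transform with respect to the head of `l` onto
`f` reproduces the sum for the tail of `l`, with `cauchyTransform p f` in place of `f`. -/
theorem sum_signedIntegral_mul_listHat_take (hfin : ∀ q ∈ p :: l, IsFiniteMeasure q.1)
    (hsep : (p :: l).IsChain SupportsSeparated)
    (hz : z ∉ cpx ((p :: l).getLast (List.cons_ne_nil p l)).1.support)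
    (hf : Integrable (fun t : ℝ => f t) p.1)
    (hzf : Integrable (fun t : ℝ => (z - t) * f t) p.1) :
    ∑ k ∈ Finset.range (l.length + 1), (-1) ^ k *
        signedIntegral p (fun t => f t * listHat (l.take k) t) * listHat (l.drop k).reverse z =
      (-1) ^ l.length *
        signedIntegral p (fun t => (z - t) * f t * l.foldr cauchyTransform (cauchyKernel z) t) := by
  induction l generalizing p f with
  | nil =>
    have hcancel : ∀ t ∈ p.1.support, f (t : ℂ) = (z - t) * f t * cauchyKernel z t := by
      intro t ht
      rw [mul_right_comm, sub_mul_cauchyKernel hz ht, one_mul]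
    simpa [listHat_nil] using signedIntegral_congr
      (g := fun t => (z - t) * f t * cauchyKernel z t) hcancel
  | cons q l ih =>
    rw [List.forall_mem_cons] at hfin
    have hsep_take (k : ℕ) : (q :: l.take k).IsChain SupportsSeparated :=
      hsep.tail.take (k + 1)
    have hfin_take (k : ℕ) : ∀ r ∈ q :: l.take k, IsFiniteMeasure r.1 :=
      fun r hr => hfin.2 r (List.mem_of_mem_take (i := k + 1) hr)
    rw [List.isChain_cons_cons] at hsep
    have := hfin.1
    have := hfin.2 q List.mem_cons_self
    have hmove (k : ℕ) : signedIntegral p (fun t => f t * listHat (q :: l.take k) t) =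
        -signedIntegral q (fun t => cauchyTransform p f t * listHat (l.take k) t) :=
      signedIntegral_mul_cauchyTransform hsep.1 hf
        (integrable_listHat (hfin_take k) (hsep_take k))
    have hfirst : signedIntegral p f * listHat (q :: l).reverse z =
        (-1) ^ l.length * (signedIntegral p f *
          signedIntegral q (l.foldr cauchyTransform (cauchyKernel z))) := by
      rw [listHat_reverse_cons hfin.2 hsep.2 hz]
      ring
    have htail := ih hfin.2 hsep.2 hz (integrable_cauchyTransform hsep.1.symm hf)
      (integrable_sub_mul_cauchyTransform hsep.1.symm hf hzf)
    rw [List.length_cons, Finset.sum_range_succ']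
    simp only [List.take_succ_cons, List.drop_succ_cons, List.take_zero, List.drop_zero, hmove,
      listHat_nil, mul_one, pow_zero, one_mul, hfirst, List.foldr_cons]
    rw [signedIntegral_mul_signedIntegral hsep.1 hf hzf
      (integrable_foldr_cauchyKernel hfin.2 hsep.2 hz)
      (integrable_sub_mul_foldr_cauchyKernel hfin.2 hsep.2 hz)]
    simp only [pow_succ, mul_neg, mul_one, neg_mul, neg_neg, htail]
    ring

theorem listHat_reverse {l : List (Measure ℝ × ℝ)} (hl : l ≠ [])
    (hfin : ∀ q ∈ l, IsFiniteMeasure q.1) (hsep : l.IsChain SupportsSeparated)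
    (hz_head : z ∉ cpx (l.head hl).1.support) (hz_last : z ∉ cpx (l.getLast hl).1.support) :
    listHat l.reverse z = ∑ k ∈ Finset.range l.length,
      (-1) ^ k * listHat (l.take (k + 1)) z * listHat (l.drop (k + 1)).reverse z := by
  obtain ⟨p, l, rfl⟩ := List.exists_cons_of_ne_nil hl
  have := hfin p List.mem_cons_self
  have hcancel : ∀ t ∈ p.1.support,
      (z - t) * cauchyKernel z t * l.foldr cauchyTransform (cauchyKernel z) t =
        l.foldr cauchyTransform (cauchyKernel z) (t : ℂ) := by
    intro t ht
    rw [sub_mul_cauchyKernel hz_head ht, one_mul]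
  rw [listHat_reverse_cons hfin hsep hz_last, ← signedIntegral_congr (f := fun t =>
      (z - t) * cauchyKernel z t * l.foldr cauchyTransform (cauchyKernel z) t) hcancel,
    ← sum_signedIntegral_mul_listHat_take hfin hsep hz_last (integrable_cauchyKernel hz_head)
      (integrable_sub_mul_cauchyKernel hz_head)]
  simp only [List.length_cons, List.take_succ_cons, List.drop_succ_cons, listHat_cons,
    cauchyTransform_eq_signedIntegral_cauchyKernel, mul_comm (cauchyKernel z _)]

end Chain

section Sequence

variable {μ : ℕ → Measure ℝ} {e : ℕ → ℝ} {i j : ℕ}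

theorem length_chain : (chain μ e i j).length = j + 1 - i := by
  simp [chain]

theorem chain_ne_nil (hij : i ≤ j) : chain μ e i j ≠ [] := by
  rw [← List.length_pos_iff, length_chain]
  omega

theorem head_chain (h : chain μ e i j ≠ []) : (chain μ e i j).head h = (μ i, e i) := by
  simp [chain]

theorem getLast_chain (hij : i ≤ j) :
    (chain μ e i j).getLast (chain_ne_nil hij) = (μ j, e j) := by
  have hlast : i + (j + 1 - i) - 1 = j := by omega
  simp [chain, hlast]

theorem take_chain {k : ℕ} (hk : i + k ≤ j) :
    (chain μ e i j).take (k + 1) = chain μ e i (i + k) := by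
  rw [chain, chain, ← List.map_take, List.take_range'_of_length_ge (by omega)]
  congr 2
  omega

theorem drop_chain (k : ℕ) : (chain μ e i j).drop k = chain μ e (i + k) j := by
  rw [chain, chain, ← List.map_drop, List.drop_range', mul_one]
  congr 2
  omega

theorem isChain_chain {R : Measure ℝ × ℝ → Measure ℝ × ℝ → Prop}
    (h : ∀ k, i ≤ k → k < j → R (μ k, e k) (μ (k + 1), e (k + 1))) :
    (chain μ e i j).IsChain R := by
  rw [List.isChain_iff_getElem]
  intro k hk
  rw [length_chain] at hk
  simpa [chain, add_assoc] using h (i + k) (by omega) (by omega)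

theorem reversed_chain_formula_general (μ : ℕ → Measure ℝ) (e : ℕ → ℝ) {i j : ℕ} (hij : i ≤ j)
    (hfin : ∀ k, i ≤ k → k ≤ j → IsFiniteMeasure (μ k))
    (hsep : ∀ k, i ≤ k → k < j → Metric.AreSeparated (μ k).support (μ (k + 1)).support)
    {z : ℂ} (hzi : z ∉ cpx (μ i).support) (hzj : z ∉ cpx (μ j).support) :
    listHat (rchain μ e i j) z =
      (∑ k ∈ Finset.Ico i j, (-1 : ℂ) ^ (k - i) *
        listHat (chain μ e i k) z * listHat (rchain μ e (k + 1) j) z) +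
      (-1 : ℂ) ^ (j - i) * listHat (chain μ e i j) z := by
  have hfin_chain : ∀ p ∈ chain μ e i j, IsFiniteMeasure p.1 := by
    simp only [chain, List.forall_mem_map, List.mem_range'_1]
    exact fun k hk => hfin k hk.1 (by omega)
  have hlength : (chain μ e i j).length = j - i + 1 := by
    rw [length_chain, Nat.sub_add_comm hij]
  rw [rchain, listHat_reverse (chain_ne_nil hij) hfin_chain (isChain_chain hsep)
    (by rwa [head_chain]) (by rwa [getLast_chain hij]), hlength, Finset.sum_range_succ,
    Finset.sum_Ico_eq_sum_range, ← hlength, List.take_length, List.drop_length, List.reverse_nil,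
    listHat_nil, mul_one]
  congr 1
  refine Finset.sum_congr rfl fun k hk => ?_
  rw [take_chain (by grind), drop_chain, add_tsub_cancel_left, rchain, add_assoc]

end Sequence

theorem msupport_eq_support (μ : Measure ℝ) : msupport μ = μ.support := by
  ext x
  simp only [msupport, Set.mem_ofPred_eq, Measure.support_eq_forall_isOpen, pos_iff_ne_zero]
  grind

namespace NikSys

variable {m : ℕ} (S : NikSys m) {k : ℕ}

theorem support_subset_Icc (hk : k ≤ m) : (S.μ k).support ⊆ Icc (S.a k) (S.b k) := by
  rw [← S.hull k hk, ← msupport_eq_support]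
  exact subset_convexHull ℝ _

theorem areSeparated_support (hk : k < m) :
    Metric.AreSeparated (S.μ k).support (S.μ (k + 1)).support := by
  obtain ⟨r, hr, h⟩ := Metric.exists_pos_forall_lt_edist isCompact_Icc isClosed_Icc
    (disjoint_iff_inter_eq_empty.2 (S.disj k hk))
  exact ⟨r, by exact_mod_cast hr.ne', fun x hx y hy =>
    (h x (S.support_subset_Icc hk.le hx) y (S.support_subset_Icc hk hy)).le⟩

theorem notMem_cpx_support (hk : k ≤ m) {z : ℂ} (hz : z ∉ cpx (Icc (S.a k) (S.b k))) :
    z ∉ cpx (S.μ k).support :=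
  fun h => hz (image_mono (S.support_subset_Icc hk) h)

end NikSys

/-- For a Nikishin system and `0 ≤ i < j ≤ m`, on
`ℂ ∖ (Δ_i ∪ Δ_j)` one has
`⟨σ_j,…,σ_i⟩^ = ∑_{k=i}^{j-1} (-1)^{k-i} ⟨σ_i,…,σ_k⟩^ ⟨σ_j,…,σ_{k+1}⟩^
 + (-1)^{j-i} ⟨σ_i,…,σ_j⟩^`. -/
theorem reversed_chain_formula
    (m : ℕ) (S : NikSys m) (i j : ℕ) (hij : i < j) (hj : j ≤ m) :
    ∀ z : ℂ, z ∉ cpx (Set.Icc (S.a i) (S.b i)) → z ∉ cpx (Set.Icc (S.a j) (S.b j)) →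
      listHat (rchain S.μ S.e i j) z =
        (∑ k ∈ Finset.Icc i (j - 1), (-1 : ℂ) ^ (k - i) *
          listHat (chain S.μ S.e i k) z * listHat (rchain S.μ S.e (k + 1) j) z) +
        (-1 : ℂ) ^ (j - i) * listHat (chain S.μ S.e i j) z := by
  intro z hzi hzj
  rw [Finset.Icc_sub_one_right_eq_Ico_of_not_isMin (not_isMin_of_lt hij)]
  exact reversed_chain_formula_general S.μ S.e hij.le (fun k _ _ => S.fin k)
    (fun k _ hk => S.areSeparated_support (hk.trans_le hj))
    (S.notMem_cpx_support (hij.le.trans hj) hzi) (S.notMem_cpx_support hj hzj)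

end
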